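/- arXiv:1706.00830 — 5 statements merged into one kernel-verified Lean document; each statement's English description precedes it below -/
import Mathlib

section
/- (Hindman's theorem, finite-unions form.) For every colouring of the set [ω]^{<ω} of nonempty finite subsets of ω into finitely many colours, there exists an infinite pairwise disjoint family X of nonempty finite subsets of ω such that FU(X) is monochromatic (i.e., all elements of FU(X) receive the same colour). -/
/-- `FU X` is the set of all unions `⋃_{x ∈ F} x` where `F` ranges over the
nonempty finite subsets of `X`. -/
def FU (X : Set (Finset ℕ)) : Set (Finset ℕ) :=
  {s | ∃ F : Finset (Finset ℕ), F.Nonempty ∧ ↑F ⊆ X ∧ s = F.sup id}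

/-- Finite sets of naturals with an absorbing element adjoined, multiplied by disjoint union; the
product of two sets that meet is the absorbing element. -/
inductive DisjointUnionMonoid : Type
  | of (s : Finset ℕ)
  | absorbing

namespace DisjointUnionMonoid

/-- Disjoint union, or the absorbing element if the sets meet. -/
def mul : DisjointUnionMonoid → DisjointUnionMonoid → DisjointUnionMonoid
  | of s, of t => if Disjoint s t then of (s ∪ t) else absorbing
  | of _, absorbing => absorbing
  | absorbing, _ => absorbing

instance : CommMonoid DisjointUnionMonoid where
  mul := mul
  one := of ∅
  mul_assoc a b c := by
    change mul (mul a b) c = mul a (mul b c)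
    rcases a with a | _ <;> rcases b with b | _ <;> rcases c with c | _ <;> simp only [mul]
    · by_cases hab : Disjoint a b <;> by_cases hbc : Disjoint b c <;>
        simp [hab, hbc, Finset.disjoint_union_left, Finset.disjoint_union_right,
          Finset.union_assoc]
    · split_ifs <;> rfl
  one_mul a := by
    change mul (of ∅) a = a
    rcases a with a | _ <;> simp [mul]
  mul_one a := by
    change mul a (of ∅) = a
    rcases a with a | _ <;> simp [mul]
  mul_comm a b := by
    change mul a b = mul b a
    rcases a with a | _ <;> rcases b with b | _ <;>
      simp [mul, disjoint_comm, Finset.union_comm]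

theorem of_injective : Function.Injective of := fun _ _ => of.inj

theorem of_mul_of {s t : Finset ℕ} (h : Disjoint s t) : of s * of t = of (s ∪ t) :=
  if_pos h

theorem mul_eq_of {a b : DisjointUnionMonoid} {u : Finset ℕ} (h : a * b = of u) :
    ∃ s t, a = of s ∧ b = of t ∧ Disjoint s t ∧ u = s ∪ t := by
  change mul a b = of u at h
  rcases a with s | _ <;> rcases b with t | _ <;> simp only [mul, reduceCtorEq] at h
  split_ifs at h with hst
  exact ⟨s, t, rfl, rfl, hst, (of_injective h).symm⟩

theorem eq_sup_of_prod_eq_of {ι : Type*} (x : ι → Finset ℕ) (G : Finset ι) {u : Finset ℕ}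
    (h : ∏ i ∈ G, of (x i) = of u) : u = G.sup x := by
  classical
  induction G using Finset.induction_on generalizing u with
  | empty => exact (of_injective (Finset.prod_empty.symm.trans h)).symm
  | insert i G hi ih =>
    rw [Finset.prod_insert hi] at h
    obtain ⟨s, t, hs, ht, -, rfl⟩ := mul_eq_of h
    rw [Finset.sup_insert, ← ih ht, of_injective hs]
    rfl

theorem exists_of_mem_FP_singletons {a : Stream' DisjointUnionMonoid} {m : DisjointUnionMonoid}
    (hm : m ∈ Hindman.FP a) (n : ℕ) (ha : ∀ i, a.get i = of {n + i}) :
    ∃ s : Finset ℕ, s.Nonempty ∧ (∀ x ∈ s, n ≤ x) ∧ m = of s := by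
  have tail_get (b : Stream' DisjointUnionMonoid) (n : ℕ) (hb : ∀ i, b.get i = of {n + i})
      (i : ℕ) : b.tail.get i = of {n + 1 + i} := by
    rw [Stream'.get_tail, hb, add_assoc, add_comm i]
  induction hm generalizing n with
  | head' a => exact ⟨{n}, by simp, by simp, ha 0⟩
  | tail' a m _ ih =>
    obtain ⟨s, hs, hn, rfl⟩ := ih (n + 1) (tail_get a n ha)
    exact ⟨s, hs, fun x hx => by have := hn x hx; lia, rfl⟩
  | cons' a m _ ih =>
    obtain ⟨s, hs, hn, rfl⟩ := ih (n + 1) (tail_get a n ha)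
    refine ⟨{n} ∪ s, by simp, ?_, ?_⟩
    · intro x hx
      rcases Finset.mem_union.1 hx with hx | hx
      · exact (Finset.mem_singleton.1 hx).ge
      · have := hn x hx; lia
    · have hd : Disjoint {n} s := by
        rw [Finset.disjoint_singleton_left]
        intro h
        have := hn n h
        lia
      rw [← of_mul_of hd]
      exact congrArg (· * of s) (ha 0)

end DisjointUnionMonoid

open DisjointUnionMonoid in
/-- Hindman's theorem, finite-unions form: for every colouring of the nonempty
finite subsets of ω into finitely many colours there is an infinite pairwise
disjoint family `X` of nonempty finite sets with `FU X` monochromatic. -/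
theorem hindman_finite_unions (k : ℕ) (c : Finset ℕ → Fin k) :
    ∃ X : Set (Finset ℕ), X.Infinite ∧ (∀ x ∈ X, x.Nonempty) ∧
      X.Pairwise (fun a b => Disjoint a b) ∧
      ∃ i : Fin k, ∀ s ∈ FU X, c s = i := by
  classical
  let C (i : Fin k) : Set DisjointUnionMonoid := {m | ∃ s, s.Nonempty ∧ c s = i ∧ m = of s}
  obtain ⟨_, ⟨i, rfl⟩, b, hb⟩ := Hindman.FP_partition_regular (fun n => of {n}) (Set.range C)
    (Set.finite_range C) fun m hm => by
      obtain ⟨s, hs, -, rfl⟩ := exists_of_mem_FP_singletons hm 0 fun j => by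
        rw [zero_add]; rfl
      exact ⟨C (c s), ⟨c s, rfl⟩, s, hs, rfl, rfl⟩
  choose x hne _ hx using fun j => hb (Hindman.FP.singleton b j)
  have hlt (p q : ℕ) (hpq : p < q) : Disjoint (x p) (x q) := by
    obtain ⟨u, -, -, hu⟩ := hb (Hindman.FP.mul_two b p q hpq)
    obtain ⟨s, t, hs, ht, hst, -⟩ := mul_eq_of hu
    rwa [of_injective ((hx p).symm.trans hs), of_injective ((hx q).symm.trans ht)]
  have hdisj (p q : ℕ) (hpq : p ≠ q) : Disjoint (x p) (x q) :=
    hpq.lt_or_gt.elim (hlt p q) fun h => (hlt q p h).symm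
  have hinj : Function.Injective x := fun p q h => by
    by_contra hpq
    have := hdisj p q hpq
    rw [h, disjoint_self] at this
    exact (hne q).ne_empty this
  refine ⟨Set.range x, Set.infinite_range_of_injective hinj, ?_, ?_, i, ?_⟩
  · rintro _ ⟨p, rfl⟩
    exact hne p
  · rintro _ ⟨p, rfl⟩ _ ⟨q, rfl⟩ hpq
    exact hdisj p q fun h => hpq (congrArg x h)
  · rintro _ ⟨F, hF, hFX, rfl⟩
    obtain ⟨G, rfl⟩ : ∃ G : Finset ℕ, G.image x = F := by
      obtain ⟨G, -, hG⟩ := Finset.subset_set_image_iff.1 (by rwa [Set.image_univ])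
      exact ⟨G, hG⟩
    obtain ⟨u, -, hu, h⟩ := hb (Hindman.FP.finsetProd b G (Finset.image_nonempty.1 hF))
    rw [Finset.prod_congr rfl fun j _ => hx j] at h
    rwa [Finset.sup_image, Function.id_comp, ← eq_sup_of_prod_eq_of x G h]
end

section
/- The cardinal invariant hom_h is unchanged if in its definition the requirement that the members of the witnessing family 𝒳 be block sequences is weakened to requiring only that they be infinite pairwise disjoint families: the least cardinality of a family 𝒳 of infinite pairwise disjoint families of nonempty finite subsets of ω such that every finite colouring of [ω]^{<ω} admits some X ∈ 𝒳 with FU(X) monochromatic equals hom_h. -/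
/-- A block sequence: an infinite family of nonempty finite subsets of ω such that
any two distinct members are separated (`max x < min y` or `max y < min x`). -/
def IsBlockSeq (X : Set (Finset ℕ)) : Prop :=
  X.Infinite ∧ (∀ x ∈ X, x.Nonempty) ∧
    ∀ x ∈ X, ∀ y ∈ X, x ≠ y →
      (∀ m ∈ x, ∀ n ∈ y, m < n) ∨ (∀ m ∈ y, ∀ n ∈ x, m < n)

/-- `FU X` is monochromatic for the colouring `c`. -/
def MonoFor (X : Set (Finset ℕ)) {k : ℕ} (c : Finset ℕ → Fin k) : Prop :=
  ∃ i : Fin k, ∀ s ∈ FU X, c s = i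

/-- `𝒳` is a family of infinite block sequences such that every finite colouring of
the nonempty finite subsets of ω admits some `X ∈ 𝒳` with `FU X` monochromatic. -/
def IsHomWitness (𝒳 : Set (Set (Finset ℕ))) : Prop :=
  (∀ X ∈ 𝒳, IsBlockSeq X) ∧
    ∀ (k : ℕ) (c : Finset ℕ → Fin k), ∃ X ∈ 𝒳, MonoFor X c

/-- The cardinal invariant `hom_h`: the least cardinality of a family of infinite
block sequences witnessing Hindman's theorem for all finite colourings. -/
noncomputable def homH : Cardinal :=
  sInf {𝔠 : Cardinal | ∃ 𝒳 : Set (Set (Finset ℕ)), IsHomWitness 𝒳 ∧ Cardinal.mk 𝒳 = 𝔠}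

theorem FU_mono {X Y : Set (Finset ℕ)} (h : X ⊆ Y) : FU X ⊆ FU Y := by
  rintro s ⟨F, hF, hFX, rfl⟩
  exact ⟨F, hF, hFX.trans h, rfl⟩

theorem MonoFor.mono {X Y : Set (Finset ℕ)} {k : ℕ} {c : Finset ℕ → Fin k}
    (hY : MonoFor Y c) (h : X ⊆ Y) : MonoFor X c := by
  obtain ⟨i, hi⟩ := hY
  exact ⟨i, fun s hs => hi s (FU_mono h hs)⟩

theorem IsBlockSeq.pairwise_disjoint {X : Set (Finset ℕ)} (hX : IsBlockSeq X) :
    X.Pairwise (fun a b => Disjoint a b) := by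
  intro x hx y hy hxy
  rw [Finset.disjoint_left]
  intro n hnx hny
  rcases hX.2.2 x hx y hy hxy with h | h
  · exact lt_irrefl n (h n hnx n hny)
  · exact lt_irrefl n (h n hny n hnx)

/-- An infinite pairwise disjoint family has a member lying entirely above any given bound. -/
theorem exists_mem_forall_lt_of_pairwise_disjoint {X : Set (Finset ℕ)} (hinf : X.Infinite)
    (hdisj : X.Pairwise (fun a b => Disjoint a b)) (N : ℕ) : ∃ y ∈ X, ∀ n ∈ y, N < n := by
  have hfin : (⋃ n ∈ Set.Iic N, {y ∈ X | n ∈ y}).Finite := by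
    refine (Set.finite_Iic N).biUnion fun n _ => Set.Subsingleton.finite ?_
    rintro x ⟨hx, hnx⟩ y ⟨hy, hny⟩
    by_contra hxy
    exact Finset.disjoint_left.mp (hdisj hx hy hxy) hnx hny
  obtain ⟨y, hyX, hy⟩ := (hinf.sdiff hfin).nonempty
  refine ⟨y, hyX, fun n hn => ?_⟩
  by_contra hN
  exact hy (Set.mem_biUnion (Set.mem_Iic.mpr (not_lt.mp hN)) ⟨hyX, hn⟩)

/-- Every infinite pairwise disjoint family contains a block sequence. -/
theorem exists_isBlockSeq_subset {X : Set (Finset ℕ)} (hinf : X.Infinite)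
    (hne : ∀ x ∈ X, x.Nonempty) (hdisj : X.Pairwise (fun a b => Disjoint a b)) :
    ∃ Y ⊆ X, IsBlockSeq Y := by
  obtain ⟨f, hfX, hf⟩ := exists_seq_of_forall_finset_exists (fun x : Finset ℕ => x ∈ X)
    (fun x y => ∀ m ∈ x, ∀ n ∈ y, m < n) fun s _ => by
      obtain ⟨y, hyX, hy⟩ :=
        exists_mem_forall_lt_of_pairwise_disjoint hinf hdisj ((s.sup id).sup id)
      refine ⟨y, hyX, fun x hx m hm n hn => lt_of_le_of_lt ?_ (hy n hn)⟩
      exact Finset.le_sup (f := id) (Finset.le_sup (f := id) hx hm)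
  have hinj : Function.Injective f := by
    refine Function.Injective.of_lt_imp_ne fun m n hmn heq => ?_
    obtain ⟨a, ha⟩ := hne _ (hfX m)
    exact lt_irrefl a (hf m n hmn a ha a (heq ▸ ha))
  refine ⟨Set.range f, Set.range_subset_iff.mpr hfX, Set.infinite_range_of_injective hinj,
    Set.forall_mem_range.mpr fun n => hne _ (hfX n), ?_⟩
  rintro _ ⟨m, rfl⟩ _ ⟨n, rfl⟩ hmn
  rcases lt_or_gt_of_ne (ne_of_apply_ne f hmn) with h | h
  · exact Or.inl (hf m n h)
  · exact Or.inr (hf n m h)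

/-- A witnessing family of pairwise disjoint families can be shrunk memberwise to a witnessing
family of block sequences. -/
theorem exists_isHomWitness_mk_le {𝒳 : Set (Set (Finset ℕ))}
    (h𝒳 : ∀ X ∈ 𝒳, X.Infinite ∧ (∀ x ∈ X, x.Nonempty) ∧ X.Pairwise (fun a b => Disjoint a b))
    (hcol : ∀ (k : ℕ) (c : Finset ℕ → Fin k), ∃ X ∈ 𝒳, MonoFor X c) :
    ∃ 𝒴 : Set (Set (Finset ℕ)), IsHomWitness 𝒴 ∧ Cardinal.mk 𝒴 ≤ Cardinal.mk 𝒳 := by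
  choose g hgsub hgblock using fun X : 𝒳 =>
    exists_isBlockSeq_subset (h𝒳 X X.2).1 (h𝒳 X X.2).2.1 (h𝒳 X X.2).2.2
  refine ⟨Set.range g, ⟨Set.forall_mem_range.mpr hgblock, fun k c => ?_⟩, Cardinal.mk_range_le⟩
  obtain ⟨X, hX, hmono⟩ := hcol k c
  exact ⟨g ⟨X, hX⟩, Set.mem_range_self _, hmono.mono (hgsub ⟨X, hX⟩)⟩

/-- `hom_h` is unchanged if the witnessing families are only required to be infinite
pairwise disjoint families of nonempty finite subsets of ω rather than block
sequences. -/
theorem homH_pairwiseDisjoint_version :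
    sInf {𝔠 : Cardinal | ∃ 𝒳 : Set (Set (Finset ℕ)),
        (∀ X ∈ 𝒳, X.Infinite ∧ (∀ x ∈ X, x.Nonempty) ∧
          X.Pairwise (fun a b => Disjoint a b)) ∧
        (∀ (k : ℕ) (c : Finset ℕ → Fin k), ∃ X ∈ 𝒳, MonoFor X c) ∧
        Cardinal.mk 𝒳 = 𝔠} = homH := by
  unfold homH
  set A : Set Cardinal := {𝔠 | ∃ 𝒳 : Set (Set (Finset ℕ)),
    (∀ X ∈ 𝒳, X.Infinite ∧ (∀ x ∈ X, x.Nonempty) ∧ X.Pairwise (fun a b => Disjoint a b)) ∧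
    (∀ (k : ℕ) (c : Finset ℕ → Fin k), ∃ X ∈ 𝒳, MonoFor X c) ∧ Cardinal.mk 𝒳 = 𝔠}
  set B : Set Cardinal := {𝔠 | ∃ 𝒳 : Set (Set (Finset ℕ)), IsHomWitness 𝒳 ∧ Cardinal.mk 𝒳 = 𝔠}
  have hBA : B ⊆ A := by
    rintro _ ⟨𝒳, ⟨hblock, hcol⟩, rfl⟩
    exact ⟨𝒳, fun X hX => ⟨(hblock X hX).1, (hblock X hX).2.1, (hblock X hX).pairwise_disjoint⟩,
      hcol, rfl⟩
  have hAB : ∀ 𝔠 ∈ A, ∃ 𝔡 ∈ B, 𝔡 ≤ 𝔠 := by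
    rintro _ ⟨𝒳, h𝒳, hcol, rfl⟩
    obtain ⟨𝒴, h𝒴, hle⟩ := exists_isHomWitness_mk_le h𝒳 hcol
    exact ⟨_, ⟨𝒴, h𝒴, rfl⟩, hle⟩
  rcases A.eq_empty_or_nonempty with hA | hA
  · rw [hA, Set.subset_eq_empty hBA hA]
  · obtain ⟨𝔡, h𝔡, hle⟩ := hAB _ (csInf_mem hA)
    exact le_antisymm (csInf_le' (hBA (csInf_mem ⟨𝔡, h𝔡⟩))) ((csInf_le' h𝔡).trans hle)
end

section
/- The cardinal invariant hom_h is unchanged if in its definition colourings into finitely many colours are replaced by colourings into two colours: the least cardinality of a family 𝒳 of infinite block sequences such that for every set A ⊆ [ω]^{<ω} there exists X ∈ 𝒳 with A FU-reaped by X (i.e., FU(X) ⊆ A or FU(X) ∩ A = ∅) equals hom_h. -/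
/-- `A` is FU-reaped by `X`: `FU X ⊆ A` or `FU X ∩ A = ∅`. -/
def FUReaped (A X : Set (Finset ℕ)) : Prop :=
  FU X ⊆ A ∨ FU X ∩ A = ∅

/-- Every element of `x` lies below every element of `y`. -/
def BlockLT (x y : Finset ℕ) : Prop :=
  ∀ m ∈ x, ∀ n ∈ y, m < n

/-- An increasing enumeration of a block sequence. -/
structure IsBlockEnum (f : ℕ → Finset ℕ) : Prop where
  nonempty : ∀ n, (f n).Nonempty
  lt : ∀ m n, m < n → BlockLT (f m) (f n)

theorem IsBlockSeq.nonempty {X : Set (Finset ℕ)} (hX : IsBlockSeq X) : X.Nonempty :=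
  hX.1.nonempty

theorem subset_FU (X : Set (Finset ℕ)) : X ⊆ FU X := fun x hx =>
  ⟨{x}, Finset.singleton_nonempty x, by simpa using hx, by simp⟩

theorem nonempty_of_mem_FU {X : Set (Finset ℕ)} (hX : ∀ x ∈ X, x.Nonempty) {s : Finset ℕ}
    (hs : s ∈ FU X) : s.Nonempty := by
  obtain ⟨F, ⟨x, hx⟩, hFX, rfl⟩ := hs
  exact (hX x (hFX hx)).mono (Finset.le_sup (f := id) hx)

theorem biUnion_mem_FU {X : Set (Finset ℕ)} {f : ℕ → Finset ℕ} (hf : ∀ n, f n ∈ X)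
    {s : Finset ℕ} (hs : s.Nonempty) : s.biUnion f ∈ FU X := by
  refine ⟨s.image f, hs.image f, ?_, ?_⟩
  · intro x hx
    obtain ⟨n, -, rfl⟩ := Finset.mem_image.1 (Finset.mem_coe.1 hx)
    exact hf n
  · rw [Finset.sup_image, Function.id_comp, Finset.sup_eq_biUnion]

theorem exists_of_mem_FU_image {X : Set (Finset ℕ)} {f : ℕ → Finset ℕ} {s : Finset ℕ}
    (hs : s ∈ FU ((fun t => t.biUnion f) '' X)) : ∃ t ∈ FU X, s = t.biUnion f := by
  obtain ⟨F, hF, hFX, rfl⟩ := hs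
  obtain ⟨G, hGX, rfl⟩ := Finset.subset_set_image_iff.1 hFX
  refine ⟨G.sup id, ⟨G, Finset.image_nonempty.1 hF, hGX, rfl⟩, ?_⟩
  ext n
  simp only [Finset.sup_image, Finset.mem_sup, Finset.mem_biUnion, Function.comp_apply, id]
  grind

namespace IsBlockEnum

variable {f g : ℕ → Finset ℕ}

theorem singleton : IsBlockEnum fun n => {n} :=
  ⟨fun n => Finset.singleton_nonempty n, fun m n h => by simpa [BlockLT] using h⟩

theorem biUnion_lt (hf : IsBlockEnum f) {s t : Finset ℕ} (h : BlockLT s t) :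
    BlockLT (s.biUnion f) (t.biUnion f) := by
  intro m hm n hn
  obtain ⟨a, ha, hma⟩ := Finset.mem_biUnion.1 hm
  obtain ⟨b, hb, hnb⟩ := Finset.mem_biUnion.1 hn
  exact hf.lt a b (h a ha b hb) m hma n hnb

theorem comp (hf : IsBlockEnum f) (hg : IsBlockEnum g) :
    IsBlockEnum fun n => (g n).biUnion f :=
  ⟨fun n => (hg.nonempty n).biUnion fun m _ => hf.nonempty m,
    fun m n h => hf.biUnion_lt (hg.lt m n h)⟩

theorem disjoint (hf : IsBlockEnum f) {m n : ℕ} (h : m ≠ n) : Disjoint (f m) (f n) := by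
  rw [Finset.disjoint_left]
  intro a ha hb
  rcases h.lt_or_gt with h | h
  · exact lt_irrefl _ (hf.lt _ _ h a ha a hb)
  · exact lt_irrefl _ (hf.lt _ _ h a hb a ha)

theorem biUnion_injective (hf : IsBlockEnum f) :
    Function.Injective fun s : Finset ℕ => s.biUnion f := by
  have key : ∀ s t : Finset ℕ, s.biUnion f = t.biUnion f → s ⊆ t := by
    intro s t h n hn
    obtain ⟨a, ha⟩ := hf.nonempty n
    have hat : a ∈ t.biUnion f := h ▸ Finset.mem_biUnion.2 ⟨n, hn, ha⟩
    obtain ⟨m, hm, ham⟩ := Finset.mem_biUnion.1 hat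
    by_contra hnt
    exact Finset.disjoint_left.1 (hf.disjoint fun h : m = n => hnt (h ▸ hm)) ham ha
  exact fun s t h => (key s t h).antisymm (key t s h.symm)

theorem isBlockSeq_image (hf : IsBlockEnum f) {X : Set (Finset ℕ)} (hX : IsBlockSeq X) :
    IsBlockSeq ((fun s => s.biUnion f) '' X) := by
  refine ⟨hX.1.image hf.biUnion_injective.injOn, ?_, ?_⟩
  · rintro _ ⟨x, hx, rfl⟩
    exact (hX.2.1 x hx).biUnion fun m _ => hf.nonempty m
  · rintro _ ⟨x, hx, rfl⟩ _ ⟨y, hy, rfl⟩ hxy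
    exact (hX.2.2 x hx y hy fun h => hxy (h ▸ rfl)).imp hf.biUnion_lt hf.biUnion_lt

end IsBlockEnum

theorem IsBlockSeq.exists_forall_lt {X : Set (Finset ℕ)} (hX : IsBlockSeq X) (N : ℕ) :
    ∃ x ∈ X, ∀ n ∈ x, N < n := by
  by_contra! h
  choose! p hpx hpN using h
  refine hX.1 (Set.Finite.of_injOn (f := p) (t := Set.Iic N) hpN ?_ (Set.finite_Iic N))
  intro x hx y hy hxy
  by_contra hne
  rcases hX.2.2 x hx y hy hne with h | h
  · exact (h _ (hpx x hx) _ (hpx y hy)).ne hxy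
  · exact (h _ (hpx y hy) _ (hpx x hx)).ne hxy.symm

theorem IsBlockSeq.exists_enum {X : Set (Finset ℕ)} (hX : IsBlockSeq X) :
    ∃ f : ℕ → Finset ℕ, IsBlockEnum f ∧ ∀ n, f n ∈ X := by
  obtain ⟨f, hf, hlt⟩ := exists_seq_of_forall_finset_exists (· ∈ X) BlockLT (by
    intro s _
    obtain ⟨y, hy, hyN⟩ := hX.exists_forall_lt ((s.sup id).sup id)
    refine ⟨y, hy, fun x hx m hm n hn => lt_of_le_of_lt ?_ (hyN n hn)⟩
    exact Finset.le_sup (f := id) (Finset.le_sup (f := id) hx hm))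
  exact ⟨f, ⟨fun n => hX.2.1 _ (hf n), hlt⟩, hf⟩

/-- The substitution of a list of sequences of finite sets into one another. -/
def iterSubst {ι : Type*} (f : ι → ℕ → Finset ℕ) : List ι → ℕ → Finset ℕ
  | [] => fun n => {n}
  | i :: l => fun n => (iterSubst f l n).biUnion (f i)

theorem isBlockEnum_iterSubst {ι : Type*} {f : ι → ℕ → Finset ℕ} (hf : ∀ i, IsBlockEnum (f i)) :
    ∀ l : List ι, IsBlockEnum (iterSubst f l)
  | [] => IsBlockEnum.singleton
  | i :: l => (hf i).comp (isBlockEnum_iterSubst hf l)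

/-- `𝒳` consists of block sequences and every set of nonempty finite sets is FU-reaped by a
member of `𝒳`. -/
def IsReapingFamily (𝒳 : Set (Set (Finset ℕ))) : Prop :=
  (∀ X ∈ 𝒳, IsBlockSeq X) ∧
    ∀ A : Set (Finset ℕ), A ⊆ {s | s.Nonempty} → ∃ X ∈ 𝒳, FUReaped A X

theorem IsHomWitness.isReapingFamily {𝒳 : Set (Set (Finset ℕ))} (h : IsHomWitness 𝒳) :
    IsReapingFamily 𝒳 := by
  classical
  refine ⟨h.1, fun A _ => ?_⟩
  obtain ⟨X, hX, i, hi⟩ := h.2 2 fun s => if s ∈ A then 0 else 1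
  refine ⟨X, hX, ?_⟩
  by_cases h0 : i = 0
  · left
    intro s hs
    by_contra hsA
    simpa [hsA, h0] using hi s hs
  · right
    refine Set.eq_empty_of_forall_notMem fun s hs => h0 ?_
    simpa [hs.2] using (hi s hs.1).symm

namespace IsReapingFamily

variable {𝒳 : Set (Set (Finset ℕ))}

theorem infinite (h : IsReapingFamily 𝒳) : 𝒳.Infinite := by
  intro hfin
  choose! a ha using fun X hX => (h.1 X hX).nonempty
  obtain ⟨X, hX, hr⟩ := h.2 (a '' 𝒳) (by
    rintro _ ⟨X, hX, rfl⟩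
    exact (h.1 X hX).2.1 _ (ha X hX))
  rcases hr with hr | hr
  · exact (h.1 X hX).1 ((hfin.image a).subset ((subset_FU X).trans hr))
  · exact Set.eq_empty_iff_forall_notMem.1 hr (a X)
      ⟨subset_FU X (ha X hX), Set.mem_image_of_mem a hX⟩

theorem exists_iterSubst (h : IsReapingFamily 𝒳) {f : 𝒳 → ℕ → Finset ℕ}
    (hf : ∀ X, IsBlockEnum (f X)) (hfX : ∀ X n, f X n ∈ X.1) (k : ℕ) (c : Finset ℕ → ℕ)
    (hc : ∀ s, s.Nonempty → c s < k) :
    ∃ (l : List 𝒳) (X : 𝒳) (i : ℕ), ∀ s ∈ FU X.1, c (s.biUnion (iterSubst f l)) = i := by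
  induction k generalizing c with
  | zero => exact absurd (hc {0} (Finset.singleton_nonempty 0)) (Nat.not_lt_zero _)
  | succ k ih =>
    obtain ⟨X, hX, hr⟩ := h.2 {s | s.Nonempty ∧ c s = k} fun s hs => hs.1
    rcases hr with hr | hr
    · exact ⟨[], ⟨X, hX⟩, k, fun s hs => by simpa [iterSubst] using (hr hs).2⟩
    · obtain ⟨l, Y, i, hi⟩ := ih (fun s => c (s.biUnion (f ⟨X, hX⟩))) (by
        intro s hs
        have hne : (s.biUnion (f ⟨X, hX⟩)).Nonempty := hs.biUnion fun m _ => (hf _).nonempty m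
        refine lt_of_le_of_ne (Nat.lt_succ_iff.1 (hc _ hne)) fun hk => ?_
        exact Set.eq_empty_iff_forall_notMem.1 hr _
          ⟨biUnion_mem_FU (hfX ⟨X, hX⟩) hs, hne, hk⟩)
      refine ⟨⟨X, hX⟩ :: l, Y, i, fun s hs => ?_⟩
      rw [← hi s hs, Finset.biUnion_biUnion]
      rfl

theorem exists_isHomWitness (h : IsReapingFamily 𝒳) :
    ∃ 𝒴, IsHomWitness 𝒴 ∧ Cardinal.mk 𝒴 ≤ Cardinal.mk 𝒳 := by
  choose f hf hfX using fun X : 𝒳 => (h.1 X.1 X.2).exists_enum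
  have : Infinite 𝒳 := h.infinite.to_subtype
  refine ⟨Set.range fun p : List 𝒳 × 𝒳 => (fun s => s.biUnion (iterSubst f p.1)) '' p.2.1,
    ⟨?_, ?_⟩, ?_⟩
  · rintro _ ⟨⟨l, X⟩, rfl⟩
    exact (isBlockEnum_iterSubst hf l).isBlockSeq_image (h.1 X.1 X.2)
  · intro k c
    obtain ⟨l, X, i, hi⟩ := h.exists_iterSubst hf hfX k (fun s => c s) fun s _ => (c s).2
    obtain ⟨x, hx⟩ := (h.1 X.1 X.2).nonempty
    have hxi := hi x (subset_FU _ hx)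
    refine ⟨_, ⟨(l, X), rfl⟩, c (x.biUnion (iterSubst f l)), fun s hs => ?_⟩
    obtain ⟨t, ht, rfl⟩ := exists_of_mem_FU_image hs
    exact Fin.ext ((hi t ht).trans hxi.symm)
  · refine Cardinal.mk_range_le.trans ?_
    rw [Cardinal.mk_prod, Cardinal.lift_id, Cardinal.lift_id, Cardinal.mk_list_eq_mk,
      Cardinal.mul_eq_self (Cardinal.aleph0_le_mk 𝒳)]

end IsReapingFamily

/-- `hom_h` is unchanged if finite colourings are replaced by two-colourings: it is
the least cardinality of a family `𝒳` of infinite block sequences such that every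
`A ⊆ [ω]^{<ω}` is FU-reaped by some member of `𝒳`. -/
theorem homH_two_colour_version :
    sInf {𝔠 : Cardinal | ∃ 𝒳 : Set (Set (Finset ℕ)),
        (∀ X ∈ 𝒳, IsBlockSeq X) ∧
        (∀ A : Set (Finset ℕ), A ⊆ {s | s.Nonempty} → ∃ X ∈ 𝒳, FUReaped A X) ∧
        Cardinal.mk 𝒳 = 𝔠} = homH := by
  apply le_antisymm
  · by_cases hne : ∃ 𝒳, IsHomWitness 𝒳
    · obtain ⟨𝒳, h𝒳⟩ := hne
      refine le_csInf ⟨_, 𝒳, h𝒳, rfl⟩ ?_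
      rintro _ ⟨𝒴, h𝒴, rfl⟩
      exact csInf_le' ⟨𝒴, h𝒴.1, h𝒴.isReapingFamily.2, rfl⟩
    · refine (le_of_eq ?_).trans zero_le
      convert Cardinal.sInf_empty
      refine Set.eq_empty_of_forall_notMem ?_
      rintro _ ⟨𝒳, hX, hA, rfl⟩
      obtain ⟨𝒴, h𝒴, -⟩ := IsReapingFamily.exists_isHomWitness ⟨hX, hA⟩
      exact hne ⟨𝒴, h𝒴⟩
  · by_cases hne : ∃ 𝒳, IsReapingFamily 𝒳
    · obtain ⟨𝒳, h𝒳⟩ := hne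
      refine le_csInf ⟨_, 𝒳, h𝒳.1, h𝒳.2, rfl⟩ ?_
      rintro _ ⟨𝒴, hY, hA, rfl⟩
      obtain ⟨𝒵, h𝒵, hle⟩ := IsReapingFamily.exists_isHomWitness ⟨hY, hA⟩
      exact le_trans (csInf_le' ⟨𝒵, h𝒵, rfl⟩) hle
    · refine (le_of_eq ?_).trans zero_le
      rw [homH]
      convert Cardinal.sInf_empty
      refine Set.eq_empty_of_forall_notMem ?_
      rintro _ ⟨𝒳, h𝒳, rfl⟩
      exact hne ⟨𝒳, h𝒳.isReapingFamily⟩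
end

section
/- Given any sequence ⟨X_n : n < ω⟩ of infinite block sequences satisfying X_{n+1} ⊆* FU(X_n) for all n < ω, there exists an infinite block sequence X such that X ⊆* FU(X_n) for all n < ω; moreover X can be chosen so that for every n < ω, all but finitely many elements of X lie in FU(X_n), and hence FU of a cofinite subset of X is contained in FU(X_n). -/
/-- `A ⊆* B`: all but finitely many elements of `A` lie in `B`. -/
def AlmostSubset (A B : Set (Finset ℕ)) : Prop := (A \ B).Finite

/-- `FU X` is closed under nonempty finite unions. -/
theorem sup_mem_FU {X : Set (Finset ℕ)} {F : Finset (Finset ℕ)} (hF : F.Nonempty)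
    (hFX : ↑F ⊆ FU X) : F.sup id ∈ FU X := by
  rw [← Finset.sup'_eq_sup hF]
  refine Finset.sup'_induction hF id ?_ fun x hx => hFX hx
  rintro a ⟨A, hA, hAX, rfl⟩ b ⟨B, hB, hBX, rfl⟩
  refine ⟨A ∪ B, hA.mono Finset.subset_union_left, ?_, Finset.sup_union.symm⟩
  rw [Finset.coe_union]
  exact Set.union_subset hAX hBX

theorem FU_subset_FU {A X : Set (Finset ℕ)} (h : A ⊆ FU X) : FU A ⊆ FU X := by
  rintro _ ⟨F, hF, hFA, rfl⟩
  exact sup_mem_FU hF (hFA.trans h)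

/-- If `A ⊆* B` and the members of `A` are nonempty, then the members of `A` lying
far enough to the right belong to `B`. -/
theorem AlmostSubset.exists_forall_mem {A B : Set (Finset ℕ)} (h : AlmostSubset A B)
    (hA : ∀ x ∈ A, x.Nonempty) :
    ∃ N, ∀ x ∈ A, (∀ i ∈ x, N ≤ i) → x ∈ B := by
  have hfin : (A \ B).Finite := h
  refine ⟨(hfin.toFinset.sup id).sup id + 1, fun x hx hN => ?_⟩
  by_contra hxB
  obtain ⟨i, hi⟩ := hA x hx
  have hmem : i ∈ hfin.toFinset.sup id :=
    Finset.le_sup (f := id) (hfin.mem_toFinset.2 ⟨hx, hxB⟩) hi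
  have hle : i ≤ (hfin.toFinset.sup id).sup id := Finset.le_sup (f := id) hmem
  have := hN i hi
  omega

/-- The members of a block sequence meeting a given initial segment are finitely many. -/
theorem IsBlockSeq.finite_setOf_exists_lt {X : Set (Finset ℕ)} (hX : IsBlockSeq X) (N : ℕ) :
    {x ∈ X | ∃ i ∈ x, i < N}.Finite := by
  have hunion : (⋃ i ∈ Set.Iio N, {x ∈ X | i ∈ x}).Finite := by
    refine (Set.finite_Iio N).biUnion fun i _ => Set.Subsingleton.finite ?_
    rintro x ⟨hx, hix⟩ y ⟨hy, hiy⟩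
    by_contra hne
    rcases hX.2.2 x hx y hy hne with h | h
    · exact lt_irrefl i (h i hix i hiy)
    · exact lt_irrefl i (h i hiy i hix)
  refine hunion.subset ?_
  rintro x ⟨hx, i, hi, hiN⟩
  exact Set.mem_biUnion (Set.mem_Iio.2 hiN) ⟨hx, hi⟩

theorem IsBlockSeq.exists_forall_le {X : Set (Finset ℕ)} (hX : IsBlockSeq X) (N : ℕ) :
    ∃ x ∈ X, ∀ i ∈ x, N ≤ i := by
  obtain ⟨x, hx, hxN⟩ := (hX.1.sdiff (hX.finite_setOf_exists_lt N)).nonempty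
  exact ⟨x, hx, fun i hi => not_lt.1 fun hlt => hxN ⟨hx, i, hi, hlt⟩⟩

theorem exists_forall_mem_FU {X : ℕ → Set (Finset ℕ)} (hblock : ∀ n, IsBlockSeq (X n))
    (hsub : ∀ n, AlmostSubset (X (n + 1)) (FU (X n))) {n m : ℕ} (hnm : n ≤ m) :
    ∃ N, ∀ x ∈ X m, (∀ i ∈ x, N ≤ i) → x ∈ FU (X n) := by
  induction m, hnm using Nat.le_induction with
  | base => exact ⟨0, fun x hx _ => subset_FU _ hx⟩
  | succ m _ ih =>
    obtain ⟨N, hN⟩ := ih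
    obtain ⟨M, hM⟩ := (hsub m).exists_forall_mem (hblock (m + 1)).2.1
    refine ⟨max N M, fun x hx hle => ?_⟩
    obtain ⟨F, hF, hFX, rfl⟩ := hM x hx fun i hi => (le_max_right N M).trans (hle i hi)
    refine sup_mem_FU hF fun y hy => hN y (hFX hy) fun i hi => ?_
    exact (le_max_left N M).trans (hle i (Finset.le_sup (f := id) hy hi))

theorem exists_mem_forall_FU {X : ℕ → Set (Finset ℕ)} (hblock : ∀ n, IsBlockSeq (X n))
    (hsub : ∀ n, AlmostSubset (X (n + 1)) (FU (X n))) (k N : ℕ) :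
    ∃ x : Finset ℕ, x.Nonempty ∧ (∀ i ∈ x, N ≤ i) ∧ ∀ n ≤ k, x ∈ FU (X n) := by
  choose! M hM using fun n (hn : n ≤ k) => exists_forall_mem_FU hblock hsub hn
  obtain ⟨x, hx, hle⟩ := (hblock k).exists_forall_le (max N ((Finset.range (k + 1)).sup M))
  refine ⟨x, (hblock k).2.1 x hx, fun i hi => (le_max_left _ _).trans (hle i hi),
    fun n hn => hM n hn x hx fun i hi => ?_⟩
  have hMn : M n ≤ (Finset.range (k + 1)).sup M :=
    Finset.le_sup (Finset.mem_range.2 (Nat.lt_succ_of_le hn))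
  exact hMn.trans ((le_max_right _ _).trans (hle i hi))

theorem isBlockSeq_range {y : ℕ → Finset ℕ} (hne : ∀ k, (y k).Nonempty)
    (hlt : ∀ a b, a < b → ∀ i ∈ y a, ∀ j ∈ y b, i < j) : IsBlockSeq (Set.range y) := by
  refine ⟨Set.infinite_range_of_injective fun a b hab => ?_, ?_, ?_⟩
  · by_contra hne'
    obtain ⟨i, hi⟩ := hne a
    rcases lt_or_gt_of_ne hne' with h | h
    · exact lt_irrefl i (hlt a b h i hi i (hab ▸ hi))
    · exact lt_irrefl i (hlt b a h i (hab ▸ hi) i hi)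
  · rintro _ ⟨k, rfl⟩
    exact hne k
  · rintro _ ⟨a, rfl⟩ _ ⟨b, rfl⟩ hab
    rcases lt_or_gt_of_ne (fun h => hab (congrArg y h) : a ≠ b) with h | h
    · exact Or.inl (hlt a b h)
    · exact Or.inr (hlt b a h)

/-- Given a sequence `⟨X n⟩` of infinite block sequences with
`X (n+1) ⊆* FU (X n)` for all `n`, there is an infinite block sequence `X` with
`X ⊆* FU (X n)` for all `n`; moreover, for every `n` some cofinite subset `X'` of
`X` satisfies `FU X' ⊆ FU (X n)`. -/
theorem exists_pseudointersection_blockSeq (X : ℕ → Set (Finset ℕ))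
    (hblock : ∀ n, IsBlockSeq (X n))
    (hsub : ∀ n, AlmostSubset (X (n + 1)) (FU (X n))) :
    ∃ Y : Set (Finset ℕ), IsBlockSeq Y ∧
      ∀ n, AlmostSubset Y (FU (X n)) ∧
        ∃ Y' ⊆ Y, (Y \ Y').Finite ∧ FU Y' ⊆ FU (X n) := by
  choose f hne hle hFU using exists_mem_forall_FU hblock hsub
  let y : ℕ → Finset ℕ := fun k => Nat.rec (f 0 0) (fun k s => f (k + 1) (s.sup id + 1)) k
  have hy : ∀ k, ∃ N, y k = f k N := by
    rintro (_ | k)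
    exacts [⟨_, rfl⟩, ⟨_, rfl⟩]
  have hyne : ∀ k, (y k).Nonempty := fun k => by
    obtain ⟨N, hN⟩ := hy k
    exact hN ▸ hne k N
  have hyFU : ∀ n k, n ≤ k → y k ∈ FU (X n) := fun n k hnk => by
    obtain ⟨N, hN⟩ := hy k
    exact hN ▸ hFU k N n hnk
  have hstep : ∀ k, ∀ i ∈ y k, ∀ j ∈ y (k + 1), i < j := fun k i hi j hj =>
    (Nat.lt_succ_of_le (Finset.le_sup (f := id) hi)).trans_le (hle (k + 1) _ j hj)
  have hlt : ∀ a b, a < b → ∀ i ∈ y a, ∀ j ∈ y b, i < j := by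
    intro a b hab
    induction b, hab using Nat.le_induction with
    | base => exact hstep a
    | succ b _ ih =>
      intro i hi j hj
      obtain ⟨l, hl⟩ := hyne b
      exact (ih i hi l hl).trans (hstep b l hl j hj)
  refine ⟨Set.range y, isBlockSeq_range hyne hlt, fun n => ?_⟩
  have htail : y '' Set.Ici n ⊆ FU (X n) := by
    rintro _ ⟨k, hk, rfl⟩
    exact hyFU n k hk
  have hfin : (Set.range y \ y '' Set.Ici n).Finite := by
    refine ((Set.finite_Iio n).image y).subset ?_
    rintro _ ⟨⟨k, rfl⟩, hk⟩
    exact ⟨k, Set.mem_Iio.2 (lt_of_not_ge fun h => hk ⟨k, h, rfl⟩), rfl⟩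
  exact ⟨hfin.subset (Set.sdiff_subset_sdiff_right htail), y '' Set.Ici n,
    Set.image_subset_range _ _, hfin, FU_subset_FU htail⟩
end

section
/- If u is a union ultrafilter on [ω]^{<ω}, then declaring the collection {A ∪ {∅} : A ∈ u} to be a neighbourhood base of the identity element ∅ yields a topology on the Boolean group ([ω]^{<ω} ∪ {∅}, △) (finite subsets of ω under symmetric difference) making it an extremally disconnected topological group; that is, there is a group topology on this group in which the neighbourhood filter of ∅ is generated by {A ∪ {∅} : A ∈ u}, and the resulting topological space is extremally disconnected. -/
/-- For a pairwise disjoint family `X`, the set `FU X ∪ {∅}` is a subgroup. -/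
theorem symmDiff_mem_FU_union_empty {X : Set (Finset ℕ)}
    (hX : X.Pairwise (fun a b => Disjoint a b)) {s t : Finset ℕ}
    (hs : s ∈ FU X ∪ {∅}) (ht : t ∈ FU X ∪ {∅}) : symmDiff s t ∈ FU X ∪ {∅} := by
  have key : ∀ s : Finset ℕ, s ∈ FU X ∪ {∅} ↔
      ∃ F : Finset (Finset ℕ), ↑F ⊆ X ∧ s = F.sup id := by
    intro s
    constructor
    · rintro (⟨F, -, hF, rfl⟩ | rfl)
      · exact ⟨F, hF, rfl⟩
      · exact ⟨∅, by simp, by simp⟩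
    · rintro ⟨F, hF, rfl⟩
      rcases F.eq_empty_or_nonempty with rfl | h
      · exact Or.inr (by simp)
      · exact Or.inl ⟨F, h, hF, rfl⟩
  rw [key] at hs ht ⊢
  obtain ⟨F, hF, rfl⟩ := hs
  obtain ⟨G, hG, rfl⟩ := ht
  have huniq : ∀ n, ∀ x ∈ X, ∀ y ∈ X, n ∈ x → n ∈ y → x = y := by
    intro n x hx y hy hnx hny
    by_contra hxy
    exact Finset.disjoint_left.1 (hX hx hy hxy) hnx hny
  refine ⟨symmDiff F G, fun x hx => ?_, ?_⟩
  · rcases Finset.mem_symmDiff.1 (Finset.mem_coe.1 hx) with h | h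
    · exact hF h.1
    · exact hG h.1
  · ext n
    simp only [Finset.mem_symmDiff, Finset.mem_sup, id]
    constructor
    · rintro (⟨⟨x, hx, hn⟩, h⟩ | ⟨⟨x, hx, hn⟩, h⟩)
      · exact ⟨x, Or.inl ⟨hx, fun h' => h ⟨x, h', hn⟩⟩, hn⟩
      · exact ⟨x, Or.inr ⟨hx, fun h' => h ⟨x, h', hn⟩⟩, hn⟩
    · rintro ⟨x, ⟨hx, h⟩ | ⟨hx, h⟩, hn⟩
      · refine Or.inl ⟨⟨x, hx, hn⟩, fun ⟨y, hy, hny⟩ => h ?_⟩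
        rwa [huniq n x (hF hx) y (hG hy) hn hny]
      · refine Or.inr ⟨⟨x, hx, hn⟩, fun ⟨y, hy, hny⟩ => h ?_⟩
        rwa [huniq n x (hG hx) y (hF hy) hn hny]

/-- The translate to `x` of the filter generated by the sets `A ∪ {∅}`, `A ∈ u`. -/
def translateNhds (u : Ultrafilter (Finset ℕ)) (x : Finset ℕ) : Filter (Finset ℕ) :=
  Filter.map (symmDiff x) (pure ∅ ⊔ (u : Filter (Finset ℕ)))

theorem mem_translateNhds {u : Ultrafilter (Finset ℕ)} {x : Finset ℕ} {s : Set (Finset ℕ)} :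
    s ∈ translateNhds u x ↔ x ∈ s ∧ symmDiff x ⁻¹' s ∈ u := by
  simp only [translateNhds, Filter.mem_map, Filter.mem_sup, Filter.mem_pure, Set.mem_preimage,
    ← Finset.bot_eq_empty, symmDiff_bot, Ultrafilter.mem_coe]

/-- If `u` is a union ultrafilter on `[ω]^{<ω}` (here realized as an ultrafilter on
`Finset ℕ` concentrating on nonempty finite sets), then there is a topology on the
Boolean group of finite subsets of ω under symmetric difference which makes it a
topological group (the operation `(x, y) ↦ x △ y` is continuous; since every
element is its own inverse this is exactly the topological-group condition), in
which the neighbourhood filter of the identity `∅` is generated by the sets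
`A ∪ {∅}` for `A ∈ u`, and which is extremally disconnected (the closure of every
open set is open). -/
theorem union_ultrafilter_gives_extremally_disconnected_group
    (u : Ultrafilter (Finset ℕ))
    (hne : {s : Finset ℕ | s.Nonempty} ∈ u)
    (hu : ∀ A ∈ u, ∃ X : Set (Finset ℕ), X.Infinite ∧ (∀ x ∈ X, x.Nonempty) ∧
      X.Pairwise (fun a b => Disjoint a b) ∧ FU X ⊆ A ∧ FU X ∈ u) :
    ∃ t : TopologicalSpace (Finset ℕ),
      -- the neighbourhood filter of ∅ is generated by {A ∪ {∅} : A ∈ u}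
      (∀ B : Set (Finset ℕ),
        B ∈ @nhds (Finset ℕ) t ∅ ↔ ∃ A ∈ u, A ∪ {(∅ : Finset ℕ)} ⊆ B) ∧
      -- group topology: symmetric difference is (jointly) continuous
      (@Continuous (Finset ℕ × Finset ℕ) (Finset ℕ)
        (@instTopologicalSpaceProd _ _ t t) t
        (fun p => symmDiff p.1 p.2)) ∧
      -- extremally disconnected
      (∀ U : Set (Finset ℕ), @IsOpen _ t U → @IsOpen _ t (@closure _ t U)) := by
  have base : ∀ x, ∀ s ∈ translateNhds u x, ∃ H : Set (Finset ℕ), H ∈ u ∧ ∅ ∈ H ∧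
      (∀ a ∈ H, ∀ b ∈ H, symmDiff a b ∈ H) ∧ ∀ a ∈ H, symmDiff x a ∈ s := by
    intro x s hs
    rw [mem_translateNhds] at hs
    obtain ⟨X, -, -, hX, hXs, hXu⟩ := hu _ hs.2
    refine ⟨FU X ∪ {∅}, Filter.mem_of_superset hXu Set.subset_union_left, Or.inr rfl,
      fun a ha b hb => symmDiff_mem_FU_union_empty hX ha hb, ?_⟩
    rintro a (ha | rfl)
    · exact hXs ha
    · simpa only [← Finset.bot_eq_empty, symmDiff_bot] using hs.1
  let t : TopologicalSpace (Finset ℕ) := TopologicalSpace.mkOfNhds (translateNhds u)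
  have hnhds : ∀ x, nhds x = translateNhds u x := by
    intro x
    refine TopologicalSpace.nhds_mkOfNhds _ x
      (fun y s hs => (mem_translateNhds.1 hs).1) fun y s hs => ?_
    obtain ⟨H, hHu, h0, hH, hHs⟩ := base y s hs
    have hmem : ∀ a ∈ H, s ∈ translateNhds u (symmDiff y a) := fun a ha =>
      mem_translateNhds.2 ⟨hHs a ha, Filter.mem_of_superset hHu fun b hb => by
        simpa only [Set.mem_preimage, symmDiff_assoc] using hHs _ (hH a ha b hb)⟩
    refine mem_translateNhds.2 ⟨?_, Filter.mem_of_superset hHu hmem⟩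
    simpa only [Set.mem_ofPred_eq, ← Finset.bot_eq_empty, symmDiff_bot] using hmem ∅ h0
  refine ⟨t, fun B => ?_, ?_, fun U hU => ?_⟩
  · rw [hnhds, mem_translateNhds]
    have hid : symmDiff (∅ : Finset ℕ) ⁻¹' B = B := Set.ext fun a => by
      rw [Set.mem_preimage, ← Finset.bot_eq_empty, bot_symmDiff]
    rw [hid]
    constructor
    · rintro ⟨h0, hB⟩
      exact ⟨B, hB, Set.union_subset subset_rfl (Set.singleton_subset_iff.2 h0)⟩
    · rintro ⟨A, hA, hAB⟩
      exact ⟨hAB (Or.inr rfl), Filter.mem_of_superset hA fun a ha => hAB (Or.inl ha)⟩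
  · rw [continuous_iff_continuousAt]
    rintro ⟨x, y⟩ s hs
    rw [hnhds] at hs
    obtain ⟨H, hHu, h0, hH, hHs⟩ := base _ s hs
    have hmem : ∀ z, symmDiff z '' H ∈ nhds z := fun z => by
      rw [hnhds, mem_translateNhds]
      exact ⟨⟨∅, h0, symmDiff_bot z⟩,
        Filter.mem_of_superset hHu fun a ha => Set.mem_image_of_mem _ ha⟩
    rw [Filter.mem_map]
    filter_upwards [prod_mem_nhds (hmem x) (hmem y)]
    rintro ⟨_, _⟩ ⟨⟨a, ha, rfl⟩, ⟨b, hb, rfl⟩⟩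
    simpa only [Set.mem_preimage, symmDiff_symmDiff_symmDiff_comm] using hHs _ (hH a ha b hb)
  · rw [isOpen_iff_mem_nhds]
    intro x hx
    by_cases hxU : x ∈ U
    · exact Filter.mem_of_superset (hU.mem_nhds hxU) subset_closure
    · rw [hnhds, mem_translateNhds]
      refine ⟨hx, Filter.mem_of_superset (x := symmDiff x ⁻¹' U) ?_
        (Set.preimage_mono subset_closure)⟩
      by_contra h
      rw [Ultrafilter.mem_coe, ← Ultrafilter.compl_mem_iff_notMem] at h
      have hUc : Uᶜ ∈ nhds x := by
        rw [hnhds, mem_translateNhds]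
        exact ⟨hxU, h⟩
      obtain ⟨y, hy, hyU⟩ := mem_closure_iff_nhds.1 hx _ hUc
      exact hy hyU
end
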